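/- Let r ≥ 2 be an integer, b ∈ {0,…,r−1} a digit, and ε > 0 a real number. The set M_b(ε) of all α ∈ [0,1) such that |p_{b,n,α,r}/n − 1/r| ≥ ε holds for infinitely many positive integers n is a Lebesgue null set. -/

import Mathlib

/-!
On the probability space `[0, 1)` with Lebesgue measure, the digits in base `r` are pairwise
independent random variables, uniformly distributed on `{0, …, r - 1}`: integers `0 ≤ k < r ^ m` and
`0 ≤ b < r` correspond to the interval of length `r ^ (-(m + 1))` on which `⌊r ^ m * α⌋ = k` and the
next digit is `b`, while `⌊r ^ m * α⌋` determines the first `m` digits.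
By the strong law of large numbers almost every `α` is simply normal, and for such an `α`
the frequencies deviate by at least `ε` only finitely often.
-/

open MeasureTheory Filter Finset

/-- The `j`-th digit (after the radix point) of `α` in base `r`: `⌊r^j * α⌋ mod r`. -/
noncomputable def digit (r : ℕ) (α : ℝ) (j : ℕ) : ℤ := ⌊(r : ℝ) ^ j * α⌋ % r

/-- `digitCount r b n α` counts the indices `j` with `1 ≤ j ≤ n` and `digit r α j = b`. -/
noncomputable def digitCount (r b n : ℕ) (α : ℝ) : ℕ :=
  ((Finset.Icc 1 n).filter (fun j => digit r α j = (b : ℤ))).card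

/-- `α` is simply normal in base `r`. -/
def SimplyNormal (r : ℕ) (α : ℝ) : Prop :=
  ∀ b < r, Tendsto (fun n : ℕ => (digitCount r b n α : ℝ) / n) atTop (nhds (1 / r))

/-- `α` is normal in base `r`: `r^m * α` is simply normal in base `r^n`
for all `n ≥ 1` and all `m ≥ 0`. -/
def NormalBase (r : ℕ) (α : ℝ) : Prop :=
  ∀ n : ℕ, 1 ≤ n → ∀ m : ℕ, SimplyNormal (r ^ n) ((r : ℝ) ^ m * α)

open ProbabilityTheory Topology

section DiscreteRandomVariables

variable {Ω S T : Type*} [MeasurableSpace Ω] {μ : Measure Ω}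
  [MeasurableSpace S] [Countable S] [MeasurableSingletonClass S]
  [MeasurableSpace T] [Countable T] [MeasurableSingletonClass T]

theorem measure_preimage_inter_eq_mul_of_forall_singleton {X : Ω → S} (hX : Measurable X)
    {A : Set Ω} {c : ENNReal} (h : ∀ x, μ (X ⁻¹' {x} ∩ A) = μ (X ⁻¹' {x}) * c) (s : Set S) :
    μ (X ⁻¹' s ∩ A) = μ (X ⁻¹' s) * c := by
  have hfiber (x : S) (_ : x ∈ s) : MeasurableSet (X ⁻¹' {x}) := hX (measurableSet_singleton x)
  rw [← Measure.restrict_apply (hX s.to_countable.measurableSet),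
    ← tsum_measure_preimage_singleton s.to_countable hfiber,
    ← tsum_measure_preimage_singleton s.to_countable hfiber, ← ENNReal.tsum_mul_right]
  exact tsum_congr fun x ↦ by rw [Measure.restrict_apply (hX (measurableSet_singleton _)), h]

theorem measure_eq_of_measure_preimage_singleton_inter_eq_mul [IsProbabilityMeasure μ] {X : Ω → S}
    (hX : Measurable X) {A : Set Ω} {c : ENNReal}
    (h : ∀ x, μ (X ⁻¹' {x} ∩ A) = μ (X ⁻¹' {x}) * c) : μ A = c := by
  simpa using measure_preimage_inter_eq_mul_of_forall_singleton hX h Set.univ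

theorem indepFun_of_measure_preimage_singleton_inter_eq_mul [IsProbabilityMeasure μ]
    {X : Ω → S} {Y : Ω → T} (hX : Measurable X) (hY : Measurable Y) (p : T → ENNReal)
    (h : ∀ x y, μ (X ⁻¹' {x} ∩ Y ⁻¹' {y}) = μ (X ⁻¹' {x}) * p y) :
    X ⟂ᵢ[μ] Y := by
  rw [indepFun_iff_measure_inter_preimage_eq_mul]
  intro s t _ _
  have hfiber (y : T) : μ (Y ⁻¹' {y} ∩ X ⁻¹' s) = μ (Y ⁻¹' {y}) * μ (X ⁻¹' s) := by
    rw [Set.inter_comm, measure_preimage_inter_eq_mul_of_forall_singleton hX (h · y),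
      measure_eq_of_measure_preimage_singleton_inter_eq_mul hX (h · y), mul_comm]
  rw [Set.inter_comm, measure_preimage_inter_eq_mul_of_forall_singleton hY hfiber, mul_comm]

theorem identDistrib_of_measure_preimage_singleton_eq {Ω' : Type*} [MeasurableSpace Ω']
    {ν : Measure Ω'} {X : Ω → S} {Y : Ω' → S} (hX : Measurable X) (hY : Measurable Y)
    (h : ∀ x, μ (X ⁻¹' {x}) = ν (Y ⁻¹' {x})) : IdentDistrib X Y μ ν where
  aemeasurable_fst := hX.aemeasurable
  aemeasurable_snd := hY.aemeasurable
  map_eq := Measure.ext_of_singleton fun x ↦ by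
    rw [Measure.map_apply hX (measurableSet_singleton x),
      Measure.map_apply hY (measurableSet_singleton x), h]

end DiscreteRandomVariables

theorem ae_tendsto_card_filter_mem_div {Ω S : Type*} [MeasurableSpace Ω] [MeasurableSpace S]
    {μ : Measure Ω} [IsFiniteMeasure μ] {X : ℕ → Ω → S}
    (hindep : Pairwise fun i j ↦ X i ⟂ᵢ[μ] X j) (hident : ∀ i, IdentDistrib (X i) (X 0) μ μ)
    {s : Set S} [DecidablePred (· ∈ s)] (hs : MeasurableSet s) :
    ∀ᵐ ω ∂μ, Tendsto (fun n : ℕ ↦ (#{i ∈ range n | X i ω ∈ s} : ℝ) / n) atTop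
      (𝓝 (μ.real (X 0 ⁻¹' s))) := by
  have hind : Measurable (s.indicator (1 : S → ℝ)) := measurable_one.indicator hs
  have hpre : NullMeasurableSet (X 0 ⁻¹' s) μ :=
    (hident 0).aemeasurable_fst.nullMeasurableSet_preimage hs
  have hcomp : s.indicator (1 : S → ℝ) ∘ X 0 = (X 0 ⁻¹' s).indicator 1 :=
    funext fun _ ↦ (Set.indicator_comp_right (X 0)).symm
  have hint : Integrable (s.indicator (1 : S → ℝ) ∘ X 0) μ :=
    hcomp ▸ (integrable_const 1).indicator₀ hpre
  have hmean : ∫ ω, (s.indicator (1 : S → ℝ) ∘ X 0) ω ∂μ = μ.real (X 0 ⁻¹' s) := by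
    rw [hcomp, integral_indicator₀ hpre]
    simp
  have slln := strong_law_ae_real (fun i ↦ s.indicator (1 : S → ℝ) ∘ X i) hint
    (fun i j hij ↦ (hindep hij).comp hind hind) (fun i ↦ (hident i).comp hind)
  rw [hmean] at slln
  simpa [Set.indicator_apply] using slln

section Floor

variable {K : Type*} [Field K] [LinearOrder K] [IsStrictOrderedRing K] [FloorRing K]

theorem preimage_floor_mul_singleton {c : K} (hc : 0 < c) (k : ℤ) :
    (fun x ↦ ⌊c * x⌋) ⁻¹' {k} = Set.Ico (k / c) ((k + 1) / c) := by
  ext x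
  simp [Int.floor_eq_iff, div_le_iff₀ hc, lt_div_iff₀ hc, mul_comm x]

theorem floor_eq_and_floor_mul_emod_eq_iff {d : ℕ} (hd : 0 < d) (x : K) (k b : ℤ) :
    ⌊x⌋ = k ∧ ⌊d * x⌋ % d = b ↔ ⌊d * x⌋ = b + d * k ∧ 0 ≤ b ∧ b < d := by
  rw [← Int.natCast_mul_floor_div_cancel hd.ne' (a := x), Int.ediv_emod_unique (mod_cast hd),
    eq_comm (a := b + d * k)]

end Floor

theorem add_mul_nonneg_and_lt_mul_iff {d b : ℤ} (hb : 0 ≤ b ∧ b < d) (k N : ℤ) :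
    0 ≤ b + d * k ∧ b + d * k < d * N ↔ 0 ≤ k ∧ k < N := by
  have hd : 0 < d := hb.1.trans_lt hb.2
  have hdiv : (b + d * k) / d = k := by
    rw [Int.add_mul_ediv_left _ _ hd.ne', Int.ediv_eq_zero_of_lt hb.1 hb.2, zero_add]
  rw [← Int.ediv_nonneg_iff_of_pos hd, mul_comm d N, ← Int.ediv_lt_iff_lt_mul hd, hdiv]

/-- The uniform distribution on `[0, 1)`, under which the digits become random variables. -/
noncomputable abbrev uniformIco : Measure ℝ := volume.restrict (Set.Ico 0 1)

instance : IsProbabilityMeasure uniformIco := ⟨by simp⟩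

theorem uniformIco_preimage_floor_natCast_mul_singleton {N : ℕ} (hN : 0 < N) (k : ℤ) :
    uniformIco ((fun α : ℝ ↦ ⌊N * α⌋) ⁻¹' {k}) =
      if 0 ≤ k ∧ k < N then (N : ENNReal)⁻¹ else 0 := by
  have hN' : (0 : ℝ) < N := mod_cast hN
  rw [preimage_floor_mul_singleton hN', Measure.restrict_apply measurableSet_Ico]
  split_ifs with hk
  · have hk₀ : (0 : ℝ) ≤ k := mod_cast hk.1
    have hk₁ : (k : ℝ) + 1 ≤ N := mod_cast hk.2
    rw [Set.inter_eq_left.2 (Set.Ico_subset_Ico (by positivity) ((div_le_one hN').2 hk₁)),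
      Real.volume_Ico, ← sub_div, add_sub_cancel_left, one_div,
      ENNReal.ofReal_inv_of_pos hN', ENNReal.ofReal_natCast]
  · rw [Set.Ico_inter_Ico, Set.Ico_eq_empty, measure_empty]
    rcases not_and_or.1 hk with hneg | hlarge
    · have hk₁ : (k : ℝ) + 1 ≤ 0 := mod_cast (by omega : k + 1 ≤ 0)
      exact not_lt.2 <| (min_le_left _ _).trans <|
        (div_nonpos_of_nonpos_of_nonneg hk₁ hN'.le).trans (le_max_right _ _)
    · have hk₀ : (N : ℝ) ≤ k := mod_cast not_lt.1 hlarge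
      exact not_lt.2 <| (min_le_right _ _).trans <|
        ((one_le_div hN').2 hk₀).trans (le_max_left _ _)

theorem uniformIco_floor_inter_floor_mul_emod {N d : ℕ} (hN : 0 < N) (hd : 0 < d) (k b : ℤ) :
    uniformIco ((fun α : ℝ ↦ ⌊N * α⌋) ⁻¹' {k} ∩ (fun α : ℝ ↦ ⌊d * (N * α)⌋ % d) ⁻¹' {b}) =
      uniformIco ((fun α : ℝ ↦ ⌊N * α⌋) ⁻¹' {k}) *
        if 0 ≤ b ∧ b < d then (d : ENNReal)⁻¹ else 0 := by
  by_cases hb : 0 ≤ b ∧ b < d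
  · have hinter : (fun α : ℝ ↦ ⌊N * α⌋) ⁻¹' {k} ∩ (fun α : ℝ ↦ ⌊d * (N * α)⌋ % d) ⁻¹' {b} =
        (fun α : ℝ ↦ ⌊(d * N : ℕ) * α⌋) ⁻¹' {b + d * k} := by
      ext α
      rw [Nat.cast_mul]
      simpa [hb, mul_assoc] using floor_eq_and_floor_mul_emod_eq_iff hd (N * α) k b
    rw [hinter, uniformIco_preimage_floor_natCast_mul_singleton (by positivity),
      uniformIco_preimage_floor_natCast_mul_singleton hN, if_pos hb, Nat.cast_mul, Nat.cast_mul,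
      if_congr (add_mul_nonneg_and_lt_mul_iff hb k N) rfl rfl, ite_mul, zero_mul, mul_comm,
      ENNReal.mul_inv (by simp) (by simp)]
  · have hinter : (fun α : ℝ ↦ ⌊N * α⌋) ⁻¹' {k} ∩
        (fun α : ℝ ↦ ⌊d * (N * α)⌋ % d) ⁻¹' {b} = ∅ :=
      Set.eq_empty_of_forall_notMem fun α hα ↦
        hb ((floor_eq_and_floor_mul_emod_eq_iff hd (N * α) k b).1 hα).2
    rw [hinter, measure_empty, if_neg hb, mul_zero]

theorem uniformIco_floor_mul_emod {N d : ℕ} (hN : 0 < N) (hd : 0 < d) (b : ℤ) :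
    uniformIco ((fun α : ℝ ↦ ⌊d * (N * α)⌋ % d) ⁻¹' {b}) =
      if 0 ≤ b ∧ b < d then (d : ENNReal)⁻¹ else 0 :=
  measure_eq_of_measure_preimage_singleton_inter_eq_mul (by fun_prop)
    (uniformIco_floor_inter_floor_mul_emod hN hd · b)

theorem indepFun_floor_floor_mul_emod {N d : ℕ} (hN : 0 < N) (hd : 0 < d) :
    (fun α : ℝ ↦ ⌊N * α⌋) ⟂ᵢ[uniformIco] fun α : ℝ ↦ ⌊d * (N * α)⌋ % d :=
  indepFun_of_measure_preimage_singleton_inter_eq_mul (by fun_prop) (by fun_prop) _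
    (uniformIco_floor_inter_floor_mul_emod hN hd)

theorem measurable_digit (r j : ℕ) : Measurable fun α ↦ digit r α j := by
  unfold digit
  fun_prop

theorem digit_succ (r : ℕ) (α : ℝ) (m : ℕ) :
    digit r α (m + 1) = ⌊r * ((r ^ m : ℕ) * α)⌋ % r := by
  rw [digit, pow_succ', mul_assoc, Nat.cast_pow]

theorem digit_eq_floor_ediv_emod {r : ℕ} (hr : 0 < r) {i m : ℕ} (him : i ≤ m) (α : ℝ) :
    digit r α i = ⌊(r ^ m : ℕ) * α⌋ / (r ^ (m - i) : ℕ) % r := by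
  have hpow : (r ^ m : ℕ) * α = (r ^ (m - i) : ℕ) * (r ^ i * α) := by
    rw [← mul_assoc, ← Nat.cast_pow, ← Nat.cast_mul, ← pow_add, Nat.sub_add_cancel him]
  rw [hpow, Int.natCast_mul_floor_div_cancel (by positivity), digit]

theorem uniformIco_digit {r : ℕ} (hr : 0 < r) (m : ℕ) (b : ℤ) :
    uniformIco ((fun α ↦ digit r α (m + 1)) ⁻¹' {b}) =
      if 0 ≤ b ∧ b < r then (r : ENNReal)⁻¹ else 0 := by
  simp only [digit_succ]
  exact uniformIco_floor_mul_emod (by positivity) hr b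

theorem identDistrib_digit {r : ℕ} (hr : 0 < r) (i j : ℕ) :
    IdentDistrib (fun α ↦ digit r α (i + 1)) (fun α ↦ digit r α (j + 1)) uniformIco uniformIco :=
  identDistrib_of_measure_preimage_singleton_eq (measurable_digit _ _) (measurable_digit _ _)
    fun b ↦ by rw [uniformIco_digit hr, uniformIco_digit hr]

theorem indepFun_digit_of_lt {r : ℕ} (hr : 0 < r) {i j : ℕ} (hij : i < j) :
    (fun α ↦ digit r α (i + 1)) ⟂ᵢ[uniformIco] fun α ↦ digit r α (j + 1) := by
  simp only [digit_succ r _ j, digit_eq_floor_ediv_emod hr (Nat.succ_le_of_lt hij)]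
  exact (indepFun_floor_floor_mul_emod (by positivity) hr).comp
    (φ := fun z : ℤ ↦ z / (r ^ (j - (i + 1)) : ℕ) % r) (by fun_prop) measurable_id

theorem pairwise_indepFun_digit {r : ℕ} (hr : 0 < r) :
    Pairwise fun i j ↦ (fun α ↦ digit r α (i + 1)) ⟂ᵢ[uniformIco] fun α ↦ digit r α (j + 1) :=
  fun _ _ hij ↦ hij.lt_or_gt.elim (indepFun_digit_of_lt hr)
    fun hji ↦ (indepFun_digit_of_lt hr hji).symm

theorem digitCount_eq_card_filter_range (r b n : ℕ) (α : ℝ) :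
    digitCount r b n α = #{i ∈ range n | digit r α (i + 1) = b} := by
  rw [digitCount, card_filter, card_filter, range_eq_Ico,
    sum_Ico_add' (fun j ↦ if digit r α j = b then 1 else 0), zero_add, Ico_add_one_right_eq_Icc]

theorem ae_tendsto_digitCount_div {r b : ℕ} (hb : b < r) :
    ∀ᵐ α ∂uniformIco, Tendsto (fun n : ℕ ↦ (digitCount r b n α : ℝ) / n) atTop (𝓝 (1 / r)) := by
  have hr : 0 < r := by omega
  have hfreq := ae_tendsto_card_filter_mem_div (pairwise_indepFun_digit hr)
    (fun i ↦ identDistrib_digit hr i 0) (measurableSet_singleton (b : ℤ))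
  have hprob : uniformIco.real ((fun α ↦ digit r α (0 + 1)) ⁻¹' {(b : ℤ)}) = 1 / r := by
    rw [measureReal_def, uniformIco_digit hr, if_pos (by omega)]
    simp
  rw [hprob] at hfreq
  simpa [digitCount_eq_card_filter_range] using hfreq

theorem ae_simplyNormal (r : ℕ) : ∀ᵐ α ∂uniformIco, SimplyNormal r α :=
  ae_all_iff.2 fun _ ↦ eventually_imp_distrib_left.2 ae_tendsto_digitCount_div

theorem SimplyNormal.eventually_abs_sub_lt {r b : ℕ} {α ε : ℝ} (hα : SimplyNormal r α)
    (hb : b < r) (hε : 0 < ε) : ∀ᶠ n : ℕ in atTop, |(digitCount r b n α : ℝ) / n - 1 / r| < ε :=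
  Metric.tendsto_nhds.1 (hα b hb) ε hε

/-- The set of numbers in `Set.Ico 0 1` whose frequency of the digit `b` deviates from
`1 / r` by at least `ε` for infinitely many `n` is a null set. -/
theorem measure_infinitely_often_deviation (r : ℕ) (hr : 2 ≤ r) (b : ℕ) (hb : b < r)
    (ε : ℝ) (hε : 0 < ε) :
    volume {α : ℝ | α ∈ Set.Ico (0 : ℝ) 1 ∧
        ∃ᶠ n : ℕ in atTop, ε ≤ |(digitCount r b n α : ℝ) / n - 1 / r|} = 0 := by
  have hnormal : ∀ᵐ α, α ∈ Set.Ico (0 : ℝ) 1 → SimplyNormal r α :=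
    (ae_restrict_iff' measurableSet_Ico).1 (ae_simplyNormal r)
  refine measure_mono_null ?_ (ae_iff.1 hnormal)
  rintro α ⟨hα, hfreq⟩ hsimple
  exact hfreq <| ((hsimple hα).eventually_abs_sub_lt hb hε).mono fun n ↦ not_le.2
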